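/- Let (Ω_i, Σ_i, P_i), i = 1,…,n, be probability spaces and let (Ω, Σ, P) be their product space. Let Ω* ⊆ Ω be a (measurable) set of exceptional events, let X : Ω → ℝ be a random variable, and let t ≥ 0. If X has upward (s,c)-certificates with respect to Ω*, then P[|X − med(X)| ≥ t] ≤ 4·e^{−t²/(4c²s)} + 4·P[Ω*]. -/

import Mathlib

open MeasureTheory

/-- `X` has upward `(s,c)`-certificates with respect to the exceptional set `Ωstar`:
for every `t > 0` and every `ω ∉ Ωstar` there is an index set `I` of size at most `s`
such that `X ω' > X ω − t` for every `ω' ∉ Ωstar` whose restriction to `I` differs from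
that of `ω` in fewer than `t/c` coordinates. -/
def HasUpwardCertificates {n : ℕ} {Ω : Fin n → Type*}
    (Ωstar : Set (∀ i, Ω i)) (X : (∀ i, Ω i) → ℝ) (s c : ℝ) : Prop :=
  ∀ t : ℝ, 0 < t → ∀ ω ∉ Ωstar, ∃ I : Finset (Fin n), (I.card : ℝ) ≤ s ∧
    ∀ ω' ∉ Ωstar,
      (({i : Fin n | i ∈ I ∧ ω i ≠ ω' i}.ncard : ℝ) < t / c → X ω - t < X ω')

/-- The median of a random variable `X` with respect to a measure `μ`:
`med(X) = sup {t | μ{X ≤ t} ≤ 1/2}`. -/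
noncomputable def medianOf {α : Type*} [MeasurableSpace α] (μ : Measure α) (X : α → ℝ) : ℝ :=
  sSup {t : ℝ | μ {ω | X ω ≤ t} ≤ 1 / 2}

/-!
Let `d` be the convex distance from a point `x` to a measurable set `A`: the Euclidean distance
from the origin to the convex hull of the zero-one vectors marking the coordinates in which `x` is
changed on its way into `A`. Induction on the number of factors gives `∫ exp (d² / 4) ≤ 1 / P A`:
over a fixed value of one coordinate, `d²` is at most the convex combination of its values for the
slice of `A` and for the projection of `A`, with weights `θ` and `1 - θ`, plus `(1 - θ)²`; Hölder's
inequality and the optimal `θ` close the induction. Only changes leading into `A` with positive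
probability are counted, which can only increase `d` and makes it measurable.

By Markov's inequality, `P A * P B ≤ exp (-τ² / (4 s))` as soon as every point of `B` comes with at
most `s` coordinates among which it differs from every point of `A` in at least `τ`. A certificate
provides such coordinates for `A = {X ≤ a} \ Ω*`, `B = {X ≥ a + t} \ Ω*` and `τ = t / c`. For
`a = med X` and `a = med X - t`, one of the events `X ≤ a` and `X ≥ a + t` has probability at least
`1 / 2`, so the other one is unlikely.
-/

open Real Set
open scoped ENNReal

section Optimization

theorem exp_neg_le_one_sub_add_sq_div_two {x : ℝ} (hx : 0 ≤ x) : exp (-x) ≤ 1 - x + x ^ 2 / 2 := by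
  rw [exp_neg]
  refine inv_le_of_inv_le₀ (by nlinarith) (le_trans ?_ (quadratic_le_exp_of_nonneg hx))
  rw [inv_le_iff_one_le_mul₀ (by nlinarith)]
  nlinarith [sq_nonneg (x ^ 2)]

theorem exp_sub_sq_le_two_sub_exp_neg {x : ℝ} (h0 : 0 ≤ x) (h1 : x ≤ 1) :
    exp (x - x ^ 2) ≤ 2 - exp (-x) := by
  have hcubic : exp (x - x ^ 2) ≤
      1 + (x - x ^ 2) + (x - x ^ 2) ^ 2 / 2 + 2 / 9 * (x - x ^ 2) ^ 3 := by
    have h := exp_bound' (x := x - x ^ 2) (by nlinarith) (by nlinarith) (n := 3) (by norm_num)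
    norm_num [Finset.sum_range_succ, Nat.factorial] at h
    linarith
  have hremainder : 0 ≤ x ^ 3 * (1 - x / 2 - 2 / 9 * (1 - x) ^ 3) := by
    have : (1 - x) ^ 3 ≤ 1 := pow_le_one₀ (by linarith) (by linarith)
    exact mul_nonneg (by positivity) (by linarith)
  nlinarith [exp_neg_le_one_sub_add_sq_div_two h0]

/-- The optimum is `θ = 1 + 2 log r`, truncated at `0` when `r ≤ exp (-1/2)`. -/
theorem exists_exp_mul_inv_rpow_le {r : ℝ≥0∞} (hr : r ≤ 1) :
    ∃ θ ∈ Icc (0 : ℝ) 1, ENNReal.ofReal (exp ((1 - θ) ^ 2 / 4)) * r⁻¹ ^ θ ≤ 2 - r := by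
  lift r to NNReal using ne_top_of_le_ne_top ENNReal.one_ne_top hr
  rw [← ENNReal.ofReal_coe_nnreal, ← ENNReal.ofReal_ofNat, ← ENNReal.ofReal_sub _ r.coe_nonneg]
  rcases le_or_gt (r : ℝ) (exp (-(1 / 2))) with hsmall | hlarge
  · refine ⟨0, by simp, ?_⟩
    rw [ENNReal.rpow_zero, mul_one]
    refine ENNReal.ofReal_le_ofReal ?_
    have := exp_sub_sq_le_two_sub_exp_neg (x := 1 / 2) (by norm_num) (by norm_num)
    norm_num at this hsmall ⊢
    linarith
  · have hr0 : (0 : ℝ) < r := (exp_pos _).trans hlarge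
    obtain ⟨x, hrx⟩ : ∃ x, (r : ℝ) = exp (-x) := ⟨-Real.log r, by rw [neg_neg, exp_log hr0]⟩
    rw [hrx] at hlarge ⊢
    have hx0 : 0 ≤ x := by
      have : (r : ℝ) ≤ 1 := mod_cast hr
      rwa [hrx, exp_le_one_iff, neg_nonpos] at this
    have hx1 : x ≤ 1 / 2 := (neg_lt_neg_iff.1 (exp_lt_exp.1 hlarge)).le
    refine ⟨1 - 2 * x, ⟨by linarith, by linarith⟩, ?_⟩
    rw [← ENNReal.ofReal_inv_of_pos (exp_pos _), ← exp_neg, neg_neg,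
      ENNReal.ofReal_rpow_of_pos (exp_pos _), ← exp_mul, ← ENNReal.ofReal_mul (exp_pos _).le,
      ← exp_add]
    refine ENNReal.ofReal_le_ofReal (le_trans (le_of_eq ?_)
      (exp_sub_sq_le_two_sub_exp_neg hx0 (by linarith)))
    ring_nf

theorem exists_exp_mul_inv_rpow_mul_inv_rpow_le {a b : ℝ≥0∞} (hab : a ≤ b) (hb0 : b ≠ 0)
    (hb : b ≠ ∞) :
    ∃ θ ∈ Icc (0 : ℝ) 1, ENNReal.ofReal (exp ((1 - θ) ^ 2 / 4)) * (a⁻¹ ^ θ * b⁻¹ ^ (1 - θ)) ≤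
      b⁻¹ * (2 - a / b) := by
  obtain ⟨θ, hθ, h⟩ := exists_exp_mul_inv_rpow_le (r := a / b)
    (ENNReal.div_le_of_le_mul (by rwa [one_mul]))
  refine ⟨θ, hθ, ?_⟩
  have ha : a⁻¹ = (a / b)⁻¹ * b⁻¹ := by
    rw [← ENNReal.mul_inv (Or.inr hb) (Or.inr hb0), ENNReal.div_mul_cancel hb0 hb]
  have hsplit : a⁻¹ ^ θ * b⁻¹ ^ (1 - θ) = (a / b)⁻¹ ^ θ * b⁻¹ := by
    rw [ha, ENNReal.mul_rpow_of_nonneg _ _ hθ.1, mul_assoc,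
      ← ENNReal.rpow_add_of_nonneg _ _ hθ.1 (sub_nonneg.2 hθ.2), add_sub_cancel, ENNReal.rpow_one]
  rw [hsplit, ← mul_assoc, mul_comm b⁻¹]
  gcongr

theorem two_sub_le_inv (r : ℝ≥0∞) : 2 - r ≤ r⁻¹ := by
  rcases eq_or_ne r 0 with rfl | h0
  · simp
  induction r with
  | top => simp
  | coe r =>
    have hr : (0 : ℝ) < r := by simpa [pos_iff_ne_zero] using h0
    rw [tsub_le_iff_right, ← ENNReal.coe_inv (by simpa using h0)]
    norm_cast
    rw [← NNReal.coe_le_coe]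
    push_cast
    rw [← sub_nonneg]
    have : (r : ℝ)⁻¹ + r - 2 = (1 - r) ^ 2 / r := by field_simp; ring
    rw [this]
    positivity

end Optimization

section ConvexDistance

variable {ι : Type*} [Fintype ι]

/-- The vector in `{0, 1}^ι` with the support `{i | u i}`. -/
def zeroOneVector (u : ι → Bool) : ι → ℝ := fun i => if u i then 1 else 0

/-- `exp (d² / 4)`, where `d` is the Euclidean distance from the origin to the convex hull of the
zero-one vectors of `W`; it is `∞` for empty `W`. When `W` is the set of patterns of disagreement
between a point and the elements of a set `A`, the number `d` is Talagrand's convex distance from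
the point to `A`. -/
noncomputable def expSqConvexDist (W : Set (ι → Bool)) : ℝ≥0∞ :=
  ⨅ v ∈ convexHull ℝ (zeroOneVector '' W), ENNReal.ofReal (exp ((∑ i, v i ^ 2) / 4))

theorem expSqConvexDist_le {W : Set (ι → Bool)} {v : ι → ℝ}
    (hv : v ∈ convexHull ℝ (zeroOneVector '' W)) :
    expSqConvexDist W ≤ ENNReal.ofReal (exp ((∑ i, v i ^ 2) / 4)) :=
  iInf₂_le v hv

theorem expSqConvexDist_empty : expSqConvexDist (∅ : Set (ι → Bool)) = ∞ := by
  simp [expSqConvexDist]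

theorem exists_expSqConvexDist_eq {W : Set (ι → Bool)} (hW : W.Nonempty) :
    ∃ v ∈ convexHull ℝ (zeroOneVector '' W),
      expSqConvexDist W = ENNReal.ofReal (exp ((∑ i, v i ^ 2) / 4)) := by
  have hcompact : IsCompact (convexHull ℝ (zeroOneVector '' W)) :=
    (W.toFinite.image _).isCompact_convexHull (𝕜 := ℝ)
  obtain ⟨v, hv, hmin⟩ := hcompact.exists_isMinOn (hW.image _).convexHull
    (f := fun v : ι → ℝ => exp ((∑ i, v i ^ 2) / 4)) (by fun_prop)
  exact ⟨v, hv, le_antisymm (expSqConvexDist_le hv)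
    (le_iInf₂ fun w hw => ENNReal.ofReal_le_ofReal (hmin hw))⟩

theorem ofReal_exp_le_expSqConvexDist {W : Set (ι → Bool)} {I : Finset ι} {s τ : ℝ}
    (hs : 0 < s) (hτ : 0 ≤ τ) (hI : (I.card : ℝ) ≤ s)
    (hW : ∀ u ∈ W, τ ≤ ∑ i ∈ I, zeroOneVector u i) :
    ENNReal.ofReal (exp (τ ^ 2 / (4 * s))) ≤ expSqConvexDist W := by
  refine le_iInf₂ fun v hv => ENNReal.ofReal_le_ofReal (exp_le_exp.2 ?_)
  have hconvex : Convex ℝ {v : ι → ℝ | τ ≤ ∑ i ∈ I, v i} :=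
    convex_halfSpace_ge ⟨fun x y => by simp [Finset.sum_add_distrib],
      fun c x => by simp [Finset.mul_sum]⟩ τ
  have hv' : τ ≤ ∑ i ∈ I, v i := convexHull_min (by rintro _ ⟨u, hu, rfl⟩; exact hW u hu) hconvex hv
  have hsq : τ ^ 2 ≤ s * ∑ i, v i ^ 2 := calc
    τ ^ 2 ≤ (∑ i ∈ I, v i) ^ 2 := pow_le_pow_left₀ hτ hv' 2
    _ ≤ I.card * ∑ i ∈ I, v i ^ 2 := sq_sum_le_card_mul_sum_sq
    _ ≤ s * ∑ i, v i ^ 2 := by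
      gcongr
      exact I.subset_univ
  rw [div_le_div_iff₀ (by positivity) (by norm_num)]
  linarith

theorem sum_sq_convexCombination_le (v w : ι → ℝ) {α β : ℝ} (hα : 0 ≤ α)
    (hβ : 0 ≤ β) (hαβ : α + β = 1) :
    ∑ i, (α * v i + β * w i) ^ 2 ≤ α * ∑ i, v i ^ 2 + β * ∑ i, w i ^ 2 := by
  rw [Finset.mul_sum, Finset.mul_sum, ← Finset.sum_add_distrib]
  exact Finset.sum_le_sum fun i _ =>
    even_two.convexOn_pow.2 (mem_univ (v i)) (mem_univ (w i)) hα hβ hαβ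

end ConvexDistance

section ConvexDistanceRecursion

variable {n : ℕ} {p : Fin (n + 1)} {W : Set (Fin (n + 1) → Bool)} {W₀ W₁ : Set (Fin n → Bool)}

theorem zeroOneVector_insertNth (b : Bool) (u : Fin n → Bool) :
    zeroOneVector (p.insertNth b u : Fin (n + 1) → Bool) =
      p.insertNth (if b then 1 else 0) (zeroOneVector u) := by
  funext i
  refine Fin.succAboveCases p ?_ (fun j => ?_) i <;> simp [zeroOneVector]

theorem insertNth_mem_convexHull {b : Bool}
    (h : ∀ u ∈ W₀, (p.insertNth b u : Fin (n + 1) → Bool) ∈ W) {v : Fin n → ℝ}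
    (hv : v ∈ convexHull ℝ (zeroOneVector '' W₀)) :
    (p.insertNth (if b then 1 else 0) v : Fin (n + 1) → ℝ) ∈ convexHull ℝ (zeroOneVector '' W) := by
  have hconvex : Convex ℝ {v : Fin n → ℝ |
      (p.insertNth (if b then 1 else 0) v : Fin (n + 1) → ℝ) ∈
        convexHull ℝ (zeroOneVector '' W)} := by
    intro x hx y hy α β hα hβ hαβ
    have hcomb := convex_convexHull ℝ (zeroOneVector '' W) hx hy hα hβ hαβ
    rw [mem_ofPred_eq]
    convert hcomb using 1
    funext i
    refine Fin.succAboveCases p ?_ (fun j => ?_) i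
    · cases b <;> simp [hαβ]
    · simp
  refine convexHull_min ?_ hconvex hv
  rintro _ ⟨u, hu, rfl⟩
  rw [mem_ofPred_eq, ← zeroOneVector_insertNth]
  exact subset_convexHull ℝ _ ⟨_, h u hu, rfl⟩

theorem expSqConvexDist_le_exp_mul (h₁ : ∀ u ∈ W₁, (p.insertNth true u : Fin (n + 1) → Bool) ∈ W) :
    expSqConvexDist W ≤ ENNReal.ofReal (exp (1 / 4)) * expSqConvexDist W₁ := by
  rcases W₁.eq_empty_or_nonempty with rfl | hW₁
  · simp [expSqConvexDist_empty, ENNReal.mul_top, exp_pos]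
  obtain ⟨v, hv, hv_eq⟩ := exists_expSqConvexDist_eq hW₁
  refine (expSqConvexDist_le (insertNth_mem_convexHull h₁ hv)).trans_eq ?_
  rw [hv_eq, ← ENNReal.ofReal_mul (exp_pos _).le, ← exp_add, Fin.sum_univ_succAbove _ p]
  simp [add_div]

theorem expSqConvexDist_le_exp_mul_rpow_mul_rpow_of_nonempty (hW₀ : W₀.Nonempty)
    (hW₁ : W₁.Nonempty) (h₀ : ∀ u ∈ W₀, (p.insertNth false u : Fin (n + 1) → Bool) ∈ W)
    (h₁ : ∀ u ∈ W₁, (p.insertNth true u : Fin (n + 1) → Bool) ∈ W) {θ : ℝ}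
    (hθ : θ ∈ Icc (0 : ℝ) 1) :
    expSqConvexDist W ≤ ENNReal.ofReal (exp ((1 - θ) ^ 2 / 4)) *
      (expSqConvexDist W₀ ^ θ * expSqConvexDist W₁ ^ (1 - θ)) := by
  obtain ⟨v, hv, hv_eq⟩ := exists_expSqConvexDist_eq hW₀
  obtain ⟨w, hw, hw_eq⟩ := exists_expSqConvexDist_eq hW₁
  have hmem := convex_convexHull ℝ _ (insertNth_mem_convexHull h₀ hv)
    (insertNth_mem_convexHull h₁ hw) hθ.1 (sub_nonneg.2 hθ.2) (add_sub_cancel _ _)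
  refine (expSqConvexDist_le hmem).trans ?_
  simp only [hv_eq, hw_eq, ENNReal.ofReal_rpow_of_pos (exp_pos _), ← exp_mul,
    ← ENNReal.ofReal_mul (exp_pos _).le, ← exp_add]
  refine ENNReal.ofReal_le_ofReal (exp_le_exp.2 ?_)
  rw [Fin.sum_univ_succAbove _ p]
  have := sum_sq_convexCombination_le v w hθ.1 (sub_nonneg.2 hθ.2) (add_sub_cancel _ _)
  simp only [Pi.add_apply, Pi.smul_apply, smul_eq_mul, Fin.insertNth_apply_same,
    Fin.insertNth_apply_succAbove, Bool.false_eq_true, if_false, if_true]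
  linarith

theorem expSqConvexDist_le_exp_mul_rpow_mul_rpow (hW₁ : W₁.Nonempty)
    (h₀ : ∀ u ∈ W₀, (p.insertNth false u : Fin (n + 1) → Bool) ∈ W)
    (h₁ : ∀ u ∈ W₁, (p.insertNth true u : Fin (n + 1) → Bool) ∈ W) {θ : ℝ}
    (hθ : θ ∈ Icc (0 : ℝ) 1) :
    expSqConvexDist W ≤ ENNReal.ofReal (exp ((1 - θ) ^ 2 / 4)) *
      (expSqConvexDist W₀ ^ θ * expSqConvexDist W₁ ^ (1 - θ)) := by
  rcases W₀.eq_empty_or_nonempty with rfl | hW₀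
  · rcases hθ.1.eq_or_lt with rfl | hθ0
    · simpa using expSqConvexDist_le_exp_mul h₁
    · obtain ⟨w, -, hw_eq⟩ := exists_expSqConvexDist_eq hW₁
      have hW₁0 : expSqConvexDist W₁ ^ (1 - θ) ≠ 0 := by
        rw [hw_eq, ENNReal.ofReal_rpow_of_pos (exp_pos _)]
        exact (ENNReal.ofReal_pos.2 (rpow_pos_of_pos (exp_pos _) _)).ne'
      rw [expSqConvexDist_empty, ENNReal.top_rpow_of_pos hθ0, ENNReal.top_mul hW₁0,
        ENNReal.mul_top (ENNReal.ofReal_pos.2 (exp_pos _)).ne']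
      exact le_top
  · exact expSqConvexDist_le_exp_mul_rpow_mul_rpow_of_nonempty hW₀ hW₁ h₀ h₁ hθ

end ConvexDistanceRecursion

section HitPatterns

variable {ι : Type*} {Ω : ι → Type*}

/-- The point obtained from `x` by replacing the coordinates `i` with `u i = true` by those of
`y`. -/
def resample (u : ι → Bool) (x y : ∀ i, Ω i) : ∀ i, Ω i := fun i => if u i then y i else x i

variable [∀ i, MeasurableSpace (Ω i)]

theorem measurable_resample (u : ι → Bool) :
    Measurable fun q : (∀ i, Ω i) × (∀ i, Ω i) => resample u q.1 q.2 := by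
  refine measurable_pi_iff.2 fun i => ?_
  unfold resample
  split_ifs <;> fun_prop

variable [Fintype ι] {P : ∀ i, Measure (Ω i)} {A : Set (∀ i, Ω i)}

/-- The patterns `u` such that resampling the coordinates of `x` selected by `u` leads into `A` with
positive probability. Since single points may be null, this stands in for the set of `u` such that
`A` contains a point agreeing with `x` off `u`; unlike the latter it depends measurably on `x`. -/
def hitPatterns (P : ∀ i, Measure (Ω i)) (A : Set (∀ i, Ω i)) (x : ∀ i, Ω i) : Set (ι → Bool) :=
  {u | ∃ᵐ y ∂Measure.pi P, resample u x y ∈ A}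

theorem hitPatterns_nonempty (hA : Measure.pi P A ≠ 0) (x : ∀ i, Ω i) :
    (hitPatterns P A x).Nonempty :=
  ⟨fun _ => true, frequently_ae_iff.2 hA⟩

theorem exists_mem_of_mem_hitPatterns {x : ∀ i, Ω i} {u : ι → Bool} (hu : u ∈ hitPatterns P A x) :
    ∃ y ∈ A, ∀ i, x i ≠ y i → u i := by
  obtain ⟨y, hy⟩ := Filter.Frequently.exists hu
  exact ⟨_, hy, fun i hi => by_contra fun hui => hi (by simp [resample, hui])⟩

theorem measurable_hitPatterns [∀ i, SigmaFinite (P i)] (hA : MeasurableSet A) :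
    Measurable (hitPatterns P A) := by
  refine measurable_set_iff.2 fun u => ?_
  simp only [hitPatterns, mem_ofPred_eq, frequently_ae_iff]
  exact (measurable_measure_prodMk_left (measurable_resample u hA)
    (measurableSet_singleton 0)).compl.mem

theorem measurable_expSqConvexDist_hitPatterns [∀ i, SigmaFinite (P i)] (hA : MeasurableSet A) :
    Measurable fun x => expSqConvexDist (hitPatterns P A x) :=
  (measurable_of_countable expSqConvexDist).comp (measurable_hitPatterns hA)

theorem ofReal_exp_le_expSqConvexDist_hitPatterns {x : ∀ i, Ω i} {I : Finset ι} {s τ : ℝ}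
    (hs : 0 < s) (hτ : 0 ≤ τ) (hI : (I.card : ℝ) ≤ s)
    (hx : ∀ y ∈ A, τ ≤ ({i : ι | i ∈ I ∧ x i ≠ y i}.ncard : ℝ)) :
    ENNReal.ofReal (exp (τ ^ 2 / (4 * s))) ≤ expSqConvexDist (hitPatterns P A x) := by
  refine ofReal_exp_le_expSqConvexDist hs hτ hI fun u hu => ?_
  obtain ⟨y, hy, hxy⟩ := exists_mem_of_mem_hitPatterns hu
  have hsum : ∑ i ∈ I, zeroOneVector u i = ((I.filter fun i => u i).card : ℝ) := by
    simp [zeroOneVector, Finset.sum_boole]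
  rw [hsum, ← ncard_coe_finset]
  refine (hx y hy).trans (Nat.cast_le.2 (ncard_le_ncard (fun i hi => ?_)))
  simpa using ⟨hi.1, hxy i hi.2⟩

end HitPatterns

section Slices

variable {n : ℕ} {Ω : Fin (n + 1) → Type*} {p : Fin (n + 1)}

/-- The section of `A` over the point `w` of the `p`-th factor. -/
def slice (p : Fin (n + 1)) (A : Set (∀ i, Ω i)) (w : Ω p) : Set (∀ j, Ω (p.succAbove j)) :=
  {y | p.insertNth w y ∈ A}

theorem resample_insertNth (b : Bool) (u : Fin n → Bool) (w w' : Ω p)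
    (x y : ∀ j, Ω (p.succAbove j)) :
    resample (p.insertNth b u : Fin (n + 1) → Bool) (p.insertNth w x) (p.insertNth w' y) =
      (p.insertNth (if b then w' else w) (resample u x y) : ∀ i, Ω i) := by
  funext i
  refine Fin.succAboveCases p ?_ (fun j => ?_) i <;> simp [resample]

variable [∀ i, MeasurableSpace (Ω i)] {P : ∀ i, Measure (Ω i)} {A : Set (∀ i, Ω i)}

/-- The projection of `A` along the `p`-th factor, where points whose fibre in `A` is null are
left out. -/
def essentialProjection (P : ∀ i, Measure (Ω i)) (p : Fin (n + 1)) (A : Set (∀ i, Ω i)) :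
    Set (∀ j, Ω (p.succAbove j)) :=
  {y | ∃ᵐ w ∂P p, p.insertNth w y ∈ A}

theorem measurable_insertNth_prod (p : Fin (n + 1)) :
    Measurable fun q : Ω p × (∀ j, Ω (p.succAbove j)) => (p.insertNth q.1 q.2 : ∀ i, Ω i) :=
  (MeasurableEquiv.piFinSuccAbove Ω p).symm.measurable

theorem measurableSet_slice (hA : MeasurableSet A) (w : Ω p) : MeasurableSet (slice p A w) :=
  ((measurable_insertNth_prod p).comp measurable_prodMk_left) hA

variable [∀ i, SigmaFinite (P i)]

theorem measurableSet_essentialProjection (hA : MeasurableSet A) :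
    MeasurableSet (essentialProjection P p A) := by
  simp only [essentialProjection, frequently_ae_iff]
  exact (measurable_measure_prodMk_right (measurable_insertNth_prod p hA)
    (measurableSet_singleton 0)).compl

theorem measurable_measure_slice (hA : MeasurableSet A) :
    Measurable fun w => Measure.pi (fun j => P (p.succAbove j)) (slice p A w) :=
  measurable_measure_prodMk_left (ν := Measure.pi fun j => P (p.succAbove j))
    (measurable_insertNth_prod p hA)

theorem measurePreserving_insertNth (P : ∀ i, Measure (Ω i)) [∀ i, SigmaFinite (P i)]
    (p : Fin (n + 1)) :
    MeasurePreserving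
      (fun q : Ω p × (∀ j, Ω (p.succAbove j)) => (p.insertNth q.1 q.2 : ∀ i, Ω i))
      ((P p).prod (Measure.pi fun j => P (p.succAbove j))) (Measure.pi P) :=
  (measurePreserving_piFinSuccAbove P p).symm

theorem lintegral_pi_eq_lintegral_insertNth {f : (∀ i, Ω i) → ℝ≥0∞} (hf : Measurable f)
    (p : Fin (n + 1)) :
    ∫⁻ z, f z ∂Measure.pi P =
      ∫⁻ w, ∫⁻ y, f (p.insertNth w y) ∂Measure.pi (fun j => P (p.succAbove j)) ∂P p := by
  rw [← (measurePreserving_insertNth P p).lintegral_comp hf]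
  exact lintegral_prod _ (hf.comp (measurable_insertNth_prod p)).aemeasurable

theorem measure_pi_eq_lintegral_slice (hA : MeasurableSet A) (p : Fin (n + 1)) :
    Measure.pi P A = ∫⁻ w, Measure.pi (fun j => P (p.succAbove j)) (slice p A w) ∂P p := by
  rw [← (measurePreserving_insertNth P p).measure_preimage hA.nullMeasurableSet,
    Measure.prod_apply (measurable_insertNth_prod p hA)]
  rfl

theorem ae_ae_insertNth_of_ae_pi {q : (∀ i, Ω i) → Prop} (h : ∀ᵐ z ∂Measure.pi P, q z)
    (p : Fin (n + 1)) :
    ∀ᵐ w ∂P p, ∀ᵐ y ∂Measure.pi fun j => P (p.succAbove j), q (p.insertNth w y) :=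
  Measure.ae_ae_of_ae_prod ((measurePreserving_insertNth P p).quasiMeasurePreserving.ae h)

theorem ae_ae_insertNth_of_ae_pi_swap {q : (∀ i, Ω i) → Prop} (h : ∀ᵐ z ∂Measure.pi P, q z)
    (p : Fin (n + 1)) :
    ∀ᵐ y ∂Measure.pi fun j => P (p.succAbove j), ∀ᵐ w ∂P p, q (p.insertNth w y) := by
  have hswap := (measurePreserving_insertNth P p).comp Measure.measurePreserving_swap
  exact Measure.ae_ae_of_ae_prod (hswap.quasiMeasurePreserving.ae h)

theorem ae_measure_slice_le (hA : MeasurableSet A) :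
    ∀ᵐ w ∂P p, Measure.pi (fun j => P (p.succAbove j)) (slice p A w) ≤
      Measure.pi (fun j => P (p.succAbove j)) (essentialProjection P p A) := by
  have hmeas : MeasurableSet {q : Ω p × (∀ j, Ω (p.succAbove j)) |
      p.insertNth q.1 q.2 ∈ A → q.2 ∈ essentialProjection P p A} :=
    (measurable_insertNth_prod p hA).imp (measurable_snd (measurableSet_essentialProjection hA))
  have hfibre : ∀ y, ∀ᵐ w ∂P p, p.insertNth w y ∈ A → y ∈ essentialProjection P p A := by
    intro y
    by_cases hy : y ∈ essentialProjection P p A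
    · simp [hy]
    · filter_upwards [Filter.not_frequently.1 hy] with w hw hwy using absurd hwy hw
  have hae : ∀ᵐ w ∂P p, ∀ᵐ y ∂Measure.pi fun j => P (p.succAbove j),
      p.insertNth w y ∈ A → y ∈ essentialProjection P p A :=
    (Measure.ae_ae_comm hmeas).2 (.of_forall hfibre)
  exact hae.mono fun w hw => measure_mono_ae hw

theorem insertNth_false_mem_hitPatterns [NeZero (P p)] {w : Ω p} {x : ∀ j, Ω (p.succAbove j)}
    {u : Fin n → Bool} (hu : u ∈ hitPatterns (fun j => P (p.succAbove j)) (slice p A w) x) :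
    (p.insertNth false u : Fin (n + 1) → Bool) ∈ hitPatterns P A (p.insertNth w x) := by
  intro hnull
  obtain ⟨w', hw'⟩ := (ae_ae_insertNth_of_ae_pi hnull p).exists
  exact hu (by simpa [resample_insertNth, slice] using hw')

theorem insertNth_true_mem_hitPatterns {w : Ω p} {x : ∀ j, Ω (p.succAbove j)} {u : Fin n → Bool}
    (hu : u ∈ hitPatterns (fun j => P (p.succAbove j)) (essentialProjection P p A) x) :
    (p.insertNth true u : Fin (n + 1) → Bool) ∈ hitPatterns P A (p.insertNth w x) := by
  intro hnull
  refine hu ?_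
  filter_upwards [ae_ae_insertNth_of_ae_pi_swap hnull p] with y hy
  simpa [resample_insertNth, essentialProjection] using hy

end Slices

section ConvexDistanceInequality

theorem lintegral_inv_mul_two_sub_div_le {α : Type*} [MeasurableSpace α] {μ : Measure α}
    [IsProbabilityMeasure μ] {g : α → ℝ≥0∞} (hg : Measurable g) {b : ℝ≥0∞} (hb0 : b ≠ 0)
    (hb : b ≠ ∞) (hgb : ∀ᵐ x ∂μ, g x ≤ b) :
    ∫⁻ x, b⁻¹ * (2 - g x / b) ∂μ ≤ (∫⁻ x, g x ∂μ)⁻¹ := by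
  have hdiv_le : ∀ᵐ x ∂μ, g x / b ≤ 1 := hgb.mono fun x hx => by
    rwa [ENNReal.div_le_iff hb0 hb, one_mul]
  have hdiv : ∫⁻ x, g x / b ∂μ = (∫⁻ x, g x ∂μ) / b := by
    simp only [div_eq_mul_inv, lintegral_mul_const _ hg]
  have hfinite : ∫⁻ x, g x / b ∂μ ≠ ∞ :=
    ((lintegral_mono_ae hdiv_le).trans_lt (by simp)).ne
  calc ∫⁻ x, b⁻¹ * (2 - g x / b) ∂μ
      = b⁻¹ * (2 - (∫⁻ x, g x ∂μ) / b) := by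
        rw [lintegral_const_mul _ (by fun_prop), lintegral_sub (by fun_prop) hfinite
          (hdiv_le.mono fun x hx => hx.trans one_le_two), hdiv]
        simp
    _ ≤ b⁻¹ * ((∫⁻ x, g x ∂μ) / b)⁻¹ := by
        gcongr
        exact two_sub_le_inv _
    _ = (∫⁻ x, g x ∂μ)⁻¹ := by
        rw [← ENNReal.mul_inv (Or.inl hb0) (Or.inl hb), ENNReal.mul_div_cancel hb0 hb]

/-- The induction step over a fixed value `w` of the `p`-th coordinate: Hölder's inequality with the
exponents `θ` and `1 - θ`, for the optimal `θ`. -/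
theorem lintegral_expSqConvexDist_insertNth_le {n : ℕ} {Ω : Fin (n + 1) → Type*}
    [∀ i, MeasurableSpace (Ω i)] {P : ∀ i, Measure (Ω i)} [∀ i, IsProbabilityMeasure (P i)]
    {A : Set (∀ i, Ω i)} (hA : MeasurableSet A) {p : Fin (n + 1)}
    (ih : ∀ S : Set (∀ j, Ω (p.succAbove j)), MeasurableSet S →
      ∫⁻ y, expSqConvexDist (hitPatterns (fun j => P (p.succAbove j)) S y)
        ∂Measure.pi (fun j => P (p.succAbove j)) ≤
          (Measure.pi (fun j => P (p.succAbove j)) S)⁻¹)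
    (hproj : Measure.pi (fun j => P (p.succAbove j)) (essentialProjection P p A) ≠ 0) {w : Ω p}
    (hle : Measure.pi (fun j => P (p.succAbove j)) (slice p A w) ≤
      Measure.pi (fun j => P (p.succAbove j)) (essentialProjection P p A)) :
    ∫⁻ y, expSqConvexDist (hitPatterns P A (p.insertNth w y))
        ∂Measure.pi (fun j => P (p.succAbove j)) ≤
      (Measure.pi (fun j => P (p.succAbove j)) (essentialProjection P p A))⁻¹ *
        (2 - Measure.pi (fun j => P (p.succAbove j)) (slice p A w) /
          Measure.pi (fun j => P (p.succAbove j)) (essentialProjection P p A)) := by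
  set ν := Measure.pi fun j => P (p.succAbove j)
  set S := slice p A w
  set B := essentialProjection P p A
  let F (D : Set (∀ j, Ω (p.succAbove j))) (y : ∀ j, Ω (p.succAbove j)) : ℝ≥0∞ :=
    expSqConvexDist (hitPatterns (fun j => P (p.succAbove j)) D y)
  have hS : MeasurableSet S := measurableSet_slice hA w
  have hB : MeasurableSet B := measurableSet_essentialProjection hA
  have hFS : Measurable (F S) := measurable_expSqConvexDist_hitPatterns hS
  have hFB : Measurable (F B) := measurable_expSqConvexDist_hitPatterns hB
  obtain ⟨θ, hθ, hopt⟩ :=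
    exists_exp_mul_inv_rpow_mul_inv_rpow_le hle hproj (measure_ne_top _ _)
  have hθ' : 0 ≤ 1 - θ := sub_nonneg.2 hθ.2
  calc ∫⁻ y, expSqConvexDist (hitPatterns P A (p.insertNth w y)) ∂ν
      ≤ ∫⁻ y, ENNReal.ofReal (exp ((1 - θ) ^ 2 / 4)) * (F S y ^ θ * F B y ^ (1 - θ)) ∂ν :=
        lintegral_mono fun y => expSqConvexDist_le_exp_mul_rpow_mul_rpow
          (hitPatterns_nonempty hproj y) (fun _ => insertNth_false_mem_hitPatterns)
          (fun _ => insertNth_true_mem_hitPatterns) hθ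
    _ = ENNReal.ofReal (exp ((1 - θ) ^ 2 / 4)) * ∫⁻ y, F S y ^ θ * F B y ^ (1 - θ) ∂ν :=
        lintegral_const_mul _ (by fun_prop)
    _ ≤ ENNReal.ofReal (exp ((1 - θ) ^ 2 / 4)) *
          ((∫⁻ y, F S y ∂ν) ^ θ * (∫⁻ y, F B y ∂ν) ^ (1 - θ)) := by
        gcongr
        exact ENNReal.lintegral_mul_norm_pow_le hFS.aemeasurable hFB.aemeasurable hθ.1 hθ'
          (add_sub_cancel _ _)
    _ ≤ ENNReal.ofReal (exp ((1 - θ) ^ 2 / 4)) * ((ν S)⁻¹ ^ θ * (ν B)⁻¹ ^ (1 - θ)) := by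
        gcongr
        exacts [hθ.1, ih S hS, ih B hB]
    _ ≤ (ν B)⁻¹ * (2 - ν S / ν B) := hopt

theorem lintegral_expSqConvexDist_hitPatterns_le {n : ℕ} {Ω : Fin n → Type*}
    [∀ i, MeasurableSpace (Ω i)] (P : ∀ i, Measure (Ω i)) [∀ i, IsProbabilityMeasure (P i)]
    {A : Set (∀ i, Ω i)} (hA : MeasurableSet A) :
    ∫⁻ x, expSqConvexDist (hitPatterns P A x) ∂Measure.pi P ≤ (Measure.pi P A)⁻¹ := by
  induction n with
  | zero =>
    rcases eq_or_ne (Measure.pi P A) 0 with hA0 | hA0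
    · simp [hA0]
    have hle_one (x : ∀ i, Ω i) : expSqConvexDist (hitPatterns P A x) ≤ 1 := by
      obtain ⟨v, -, hv⟩ := exists_expSqConvexDist_eq (hitPatterns_nonempty hA0 x)
      simp [hv]
    calc ∫⁻ x, expSqConvexDist (hitPatterns P A x) ∂Measure.pi P
        ≤ ∫⁻ _, 1 ∂Measure.pi P := lintegral_mono hle_one
      _ = 1 := by simp
      _ ≤ (Measure.pi P A)⁻¹ := ENNReal.one_le_inv.2 prob_le_one
  | succ n ih =>
    set ν := Measure.pi fun j => P ((0 : Fin (n + 1)).succAbove j)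
    set B := essentialProjection P 0 A
    have hslice := ae_measure_slice_le (P := P) (p := 0) hA
    rcases eq_or_ne (ν B) 0 with hB0 | hB0
    · have hA0 : Measure.pi P A = 0 := by
        rw [measure_pi_eq_lintegral_slice hA 0, lintegral_eq_zero_iff (measurable_measure_slice hA)]
        exact hslice.mono fun w hw => le_zero_iff.1 (hw.trans_eq hB0)
      simp [hA0]
    calc ∫⁻ x, expSqConvexDist (hitPatterns P A x) ∂Measure.pi P
        = ∫⁻ w, ∫⁻ y, expSqConvexDist (hitPatterns P A (Fin.insertNth 0 w y)) ∂ν ∂P 0 :=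
          lintegral_pi_eq_lintegral_insertNth (measurable_expSqConvexDist_hitPatterns hA) 0
      _ ≤ ∫⁻ w, (ν B)⁻¹ * (2 - ν (slice 0 A w) / ν B) ∂P 0 :=
          lintegral_mono_ae <| hslice.mono fun w hw =>
            lintegral_expSqConvexDist_insertNth_le hA (fun _ hS => ih _ hS) hB0 hw
      _ ≤ (∫⁻ w, ν (slice 0 A w) ∂P 0)⁻¹ :=
          lintegral_inv_mul_two_sub_div_le (measurable_measure_slice hA) hB0
            (measure_ne_top _ _) hslice
      _ = (Measure.pi P A)⁻¹ := by rw [measure_pi_eq_lintegral_slice hA 0]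

theorem measure_mul_measure_le_exp_of_certificates {n : ℕ} {Ω : Fin n → Type*}
    [∀ i, MeasurableSpace (Ω i)] (P : ∀ i, Measure (Ω i)) [∀ i, IsProbabilityMeasure (P i)]
    {A B : Set (∀ i, Ω i)} (hA : MeasurableSet A) {s τ : ℝ} (hs : 0 < s) (hτ : 0 ≤ τ)
    (h : ∀ x ∈ B, ∃ I : Finset (Fin n), (I.card : ℝ) ≤ s ∧
      ∀ y ∈ A, τ ≤ ({i : Fin n | i ∈ I ∧ x i ≠ y i}.ncard : ℝ)) :
    (Measure.pi P).real A * (Measure.pi P).real B ≤ exp (-(τ ^ 2 / (4 * s))) := by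
  set μ := Measure.pi P
  set K := ENNReal.ofReal (exp (τ ^ 2 / (4 * s))) with hK
  have hB : B ⊆ {x | K ≤ expSqConvexDist (hitPatterns P A x)} := by
    intro x hx
    obtain ⟨I, hI, hIA⟩ := h x hx
    exact ofReal_exp_le_expSqConvexDist_hitPatterns hs hτ hI hIA
  have hmarkov : K * μ B ≤ (μ A)⁻¹ := calc
    K * μ B ≤ K * μ {x | K ≤ expSqConvexDist (hitPatterns P A x)} := by gcongr
    _ ≤ ∫⁻ x, expSqConvexDist (hitPatterns P A x) ∂μ :=
      mul_meas_ge_le_lintegral (measurable_expSqConvexDist_hitPatterns hA) K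
    _ ≤ (μ A)⁻¹ := lintegral_expSqConvexDist_hitPatterns_le P hA
  have hprod : μ A * μ B ≤ K⁻¹ := by
    rw [ENNReal.le_inv_iff_mul_le, mul_assoc, mul_comm (μ B)]
    calc μ A * (K * μ B) ≤ μ A * (μ A)⁻¹ := by gcongr
      _ ≤ 1 := ENNReal.mul_inv_le_one _
  rw [hK, ← ENNReal.ofReal_inv_of_pos (exp_pos _), ← exp_neg] at hprod
  simpa [measureReal_def] using ENNReal.toReal_le_of_le_ofReal (exp_pos _).le hprod

end ConvexDistanceInequality

section Median

open ProbabilityTheory Filter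

theorem nonempty_setOf_cdf_le (μ : Measure ℝ) {q : ℝ} (hq : 0 < q) :
    {t | cdf μ t ≤ q}.Nonempty :=
  (((tendsto_cdf_atBot μ).eventually (gt_mem_nhds hq)).exists).imp fun _ => le_of_lt

theorem bddAbove_setOf_cdf_le (μ : Measure ℝ) {q : ℝ} (hq : q < 1) :
    BddAbove {t | cdf μ t ≤ q} := by
  obtain ⟨t, ht⟩ := ((tendsto_cdf_atTop μ).eventually (lt_mem_nhds hq)).exists
  exact ⟨t, fun r hr => ((monotone_cdf μ).reflect_lt (hr.trans_lt ht)).le⟩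

variable {α : Type*} [MeasurableSpace α] {μ : Measure α} [IsProbabilityMeasure μ] {X : α → ℝ}

theorem cdf_map_eq_real (hX : Measurable X) (t : ℝ) : cdf (μ.map X) t = μ.real {ω | X ω ≤ t} := by
  have := Measure.isProbabilityMeasure_map (μ := μ) hX.aemeasurable
  rw [cdf_eq_real, map_measureReal_apply hX measurableSet_Iic]
  rfl

theorem medianOf_eq_sSup_cdf (hX : Measurable X) :
    medianOf μ X = sSup {t | cdf (μ.map X) t ≤ 1 / 2} := by
  unfold medianOf
  congr 1
  ext t
  rw [mem_ofPred_eq, mem_ofPred_eq, cdf_map_eq_real hX, measureReal_def,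
    ← ENNReal.le_ofReal_iff_toReal_le (measure_ne_top _ _) (by norm_num),
    ENNReal.ofReal_div_of_pos two_pos]
  simp

theorem half_le_measureReal_le_medianOf (hX : Measurable X) :
    1 / 2 ≤ μ.real {ω | X ω ≤ medianOf μ X} := by
  have := Measure.isProbabilityMeasure_map (μ := μ) hX.aemeasurable
  rw [← cdf_map_eq_real hX, ← (cdf (μ.map X)).iInf_Ioi_eq]
  refine le_ciInf fun r => le_of_not_ge fun hle => (mem_Ioi.1 r.2).not_ge ?_
  exact (le_csSup (bddAbove_setOf_cdf_le _ (by norm_num)) hle).trans_eq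
    (medianOf_eq_sSup_cdf hX).symm

theorem measureReal_lt_medianOf_le_half (hX : Measurable X) :
    μ.real {ω | X ω < medianOf μ X} ≤ 1 / 2 := by
  have := Measure.isProbabilityMeasure_map (μ := μ) hX.aemeasurable
  have hleft : Function.leftLim (cdf (μ.map X)) (medianOf μ X) ≤ 1 / 2 := by
    refine le_of_tendsto ((monotone_cdf _).tendsto_leftLim _) ?_
    filter_upwards [self_mem_nhdsWithin] with r hr
    rw [medianOf_eq_sSup_cdf hX] at hr
    obtain ⟨r', hr', hrr'⟩ := exists_lt_of_lt_csSup (nonempty_setOf_cdf_le _ (by norm_num)) hr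
    exact (monotone_cdf _ hrr'.le).trans hr'
  have hmap : μ.real {ω | X ω < medianOf μ X} = (μ.map X).real (Iio (medianOf μ X)) :=
    (map_measureReal_apply hX measurableSet_Iio).symm
  rw [hmap, measureReal_def, ← measure_cdf (μ.map X),
    StieltjesFunction.measure_Iio _ (tendsto_cdf_atBot _), sub_zero]
  exact ENNReal.toReal_le_of_le_ofReal (by norm_num) (ENNReal.ofReal_le_ofReal hleft)

theorem measureReal_medianOf_add_le_half (hX : Measurable X) {t : ℝ} (ht : 0 < t) :
    μ.real {ω | medianOf μ X + t ≤ X ω} ≤ 1 / 2 := by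
  have hcompl := probReal_compl_eq_one_sub (μ := μ) (hX (measurableSet_Iic (a := medianOf μ X)))
  have hmono : μ.real {ω | medianOf μ X + t ≤ X ω} ≤ μ.real (X ⁻¹' Iic (medianOf μ X))ᶜ :=
    measureReal_mono fun ω hω => not_le.2 ((lt_add_of_pos_right _ ht).trans_le hω)
  have hhalf : 1 / 2 ≤ μ.real (X ⁻¹' Iic (medianOf μ X)) := half_le_measureReal_le_medianOf hX
  linarith

theorem half_le_measureReal_medianOf_le (hX : Measurable X) :
    1 / 2 ≤ μ.real {ω | medianOf μ X ≤ X ω} := by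
  have hcompl := probReal_compl_eq_one_sub (μ := μ) (hX (measurableSet_Iio (a := medianOf μ X)))
  have heq : (X ⁻¹' Iio (medianOf μ X))ᶜ = {ω | medianOf μ X ≤ X ω} := by ext; simp
  have hhalf : μ.real (X ⁻¹' Iio (medianOf μ X)) ≤ 1 / 2 := measureReal_lt_medianOf_le_half hX
  rw [heq] at hcompl
  linarith

theorem measureReal_le_medianOf_sub_le_half (hX : Measurable X) {t : ℝ} (ht : 0 < t) :
    μ.real {ω | X ω ≤ medianOf μ X - t} ≤ 1 / 2 :=
  (measureReal_mono fun _ hω => lt_of_le_of_lt hω (sub_lt_self _ ht)).trans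
    (measureReal_lt_medianOf_le_half hX)

end Median

section Tails

theorem measureReal_le_sdiff_add {α : Type*} [MeasurableSpace α] (μ : Measure α)
    [IsFiniteMeasure μ] (U N : Set α) : μ.real U ≤ μ.real (U \ N) + μ.real N :=
  (measureReal_mono (by rw [sdiff_union_self]; exact subset_union_left)).trans
    (measureReal_union_le _ _)

theorem measureReal_le_of_sdiff_mul_sdiff_le {α : Type*} [MeasurableSpace α] {μ : Measure α}
    [IsFiniteMeasure μ] {U V N : Set α} {E : ℝ} (hU : 1 / 2 ≤ μ.real U) (hV : μ.real V ≤ 1 / 2)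
    (hE : μ.real (U \ N) * μ.real (V \ N) ≤ E) : μ.real V ≤ 2 * E + 2 * μ.real N := by
  have hU' := measureReal_le_sdiff_add μ U N
  have hV' := measureReal_le_sdiff_add μ V N
  have hVN : μ.real (V \ N) ≤ 1 / 2 := (measureReal_mono sdiff_subset).trans hV
  have hN : 0 ≤ μ.real N := measureReal_nonneg
  nlinarith [mul_nonneg (sub_nonneg.2 (hU.trans hU')) (measureReal_nonneg (μ := μ) (s := V \ N)),
    mul_nonneg hN (sub_nonneg.2 hVN)]

theorem measureReal_le_abs_sub_le {α : Type*} [MeasurableSpace α] (μ : Measure α)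
    [IsFiniteMeasure μ] (X : α → ℝ) (m t : ℝ) :
    μ.real {ω | t ≤ |X ω - m|} ≤ μ.real {ω | m + t ≤ X ω} + μ.real {ω | X ω ≤ m - t} := by
  refine (measureReal_mono fun ω hω => ?_).trans (measureReal_union_le _ _)
  rcases le_abs.1 (show t ≤ |X ω - m| from hω) with h | h
  · exact Or.inl (le_sub_iff_add_le'.1 h)
  · exact Or.inr (show X ω ≤ m - t by linarith)

namespace HasUpwardCertificates

variable {n : ℕ} {Ω : Fin n → Type*} [∀ i, MeasurableSpace (Ω i)] (P : ∀ i, Measure (Ω i))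
  [∀ i, IsProbabilityMeasure (P i)] {Ωstar : Set (∀ i, Ω i)} {X : (∀ i, Ω i) → ℝ} {s c t : ℝ}

theorem measureReal_mul_measureReal_le (hcert : HasUpwardCertificates Ωstar X s c)
    (hΩstar : MeasurableSet Ωstar) (hX : Measurable X) (hs : 0 < s) (hc : 0 < c) (ht : 0 < t)
    (a : ℝ) :
    (Measure.pi P).real ({ω | X ω ≤ a} \ Ωstar) *
      (Measure.pi P).real ({ω | a + t ≤ X ω} \ Ωstar) ≤ exp (-(t ^ 2) / (4 * c ^ 2 * s)) := by
  have hexponent : -(t ^ 2) / (4 * c ^ 2 * s) = -((t / c) ^ 2 / (4 * s)) := by field_simp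
  rw [hexponent]
  refine measure_mul_measure_le_exp_of_certificates P ((hX measurableSet_Iic).diff hΩstar) hs
    (by positivity) fun x hx => ?_
  obtain ⟨I, hI, hIX⟩ := hcert t ht x hx.2
  refine ⟨I, hI, fun y hy => le_of_not_gt fun hlt => ?_⟩
  linarith [hIX y hy.2 hlt, show a + t ≤ X x from hx.1, show X y ≤ a from hy.1]

theorem measureReal_medianOf_add_le (hcert : HasUpwardCertificates Ωstar X s c)
    (hΩstar : MeasurableSet Ωstar) (hX : Measurable X) (hs : 0 < s) (hc : 0 < c) (ht : 0 < t) :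
    (Measure.pi P).real {ω | medianOf (Measure.pi P) X + t ≤ X ω} ≤
      2 * exp (-(t ^ 2) / (4 * c ^ 2 * s)) + 2 * (Measure.pi P).real Ωstar :=
  measureReal_le_of_sdiff_mul_sdiff_le (half_le_measureReal_le_medianOf hX)
    (measureReal_medianOf_add_le_half hX ht)
    (hcert.measureReal_mul_measureReal_le P hΩstar hX hs hc ht _)

theorem measureReal_le_medianOf_sub_le (hcert : HasUpwardCertificates Ωstar X s c)
    (hΩstar : MeasurableSet Ωstar) (hX : Measurable X) (hs : 0 < s) (hc : 0 < c) (ht : 0 < t) :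
    (Measure.pi P).real {ω | X ω ≤ medianOf (Measure.pi P) X - t} ≤
      2 * exp (-(t ^ 2) / (4 * c ^ 2 * s)) + 2 * (Measure.pi P).real Ωstar := by
  have hproduct := hcert.measureReal_mul_measureReal_le P hΩstar hX hs hc ht
    (medianOf (Measure.pi P) X - t)
  rw [sub_add_cancel, mul_comm] at hproduct
  exact measureReal_le_of_sdiff_mul_sdiff_le (half_le_measureReal_medianOf_le hX)
    (measureReal_le_medianOf_sub_le_half hX ht) hproduct

end HasUpwardCertificates

end Tails

/-- Talagrand's inequality with exceptional outcomes: on a product of `n` probability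
spaces, if `X` has upward `(s,c)`-certificates with respect to the exceptional set
`Ωstar`, then `P[|X − med(X)| ≥ t] ≤ 4·e^{−t²/(4c²s)} + 4·P[Ωstar]`. -/
theorem talagrand_with_exceptions {n : ℕ} {Ω : Fin n → Type*}
    [∀ i, MeasurableSpace (Ω i)] (P : ∀ i, Measure (Ω i))
    [∀ i, IsProbabilityMeasure (P i)]
    (Ωstar : Set (∀ i, Ω i)) (hΩstar : MeasurableSet Ωstar)
    (X : (∀ i, Ω i) → ℝ) (hX : Measurable X)
    (s c : ℝ) (hs : 0 < s) (hc : 0 < c)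
    (hcert : HasUpwardCertificates Ωstar X s c) (t : ℝ) (ht : 0 ≤ t) :
    ((Measure.pi P) {ω | t ≤ |X ω - medianOf (Measure.pi P) X|}).toReal ≤
      4 * Real.exp (-(t ^ 2) / (4 * c ^ 2 * s)) + 4 * ((Measure.pi P) Ωstar).toReal := by
  rcases ht.eq_or_lt with rfl | ht
  · have hstar : 0 ≤ (Measure.pi P Ωstar).toReal := ENNReal.toReal_nonneg
    refine (measureReal_le_one (μ := Measure.pi P)).trans ?_
    norm_num
    linarith
  have hsplit := measureReal_le_abs_sub_le (Measure.pi P) X (medianOf (Measure.pi P) X) t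
  have hupper := hcert.measureReal_medianOf_add_le P hΩstar hX hs hc ht
  have hlower := hcert.measureReal_le_medianOf_sub_le P hΩstar hX hs hc ht
  simp only [measureReal_def] at hsplit hupper hlower
  linarith
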